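/- Let X be an (N+n)×(N+n) skew-symmetric real matrix whose upper-left N×N block X_∅ is invertible (N even). Then there exists an n×n skew-symmetric real matrix Y such that for every subset I ⊆ {N+1,…,N+n}, Pf(X_I) = Pf(Y_I)·Pf(X_∅), where X_I is the principal submatrix of X on indices {1,…,N} ∪ I, and Y_I is the principal submatrix of Y on I. -/

import Mathlib

/-- The Pfaffian of a square real matrix, via the permutation-sum formula;
defined to be `0` in odd size. -/
noncomputable def Pf {m : ℕ} (A : Matrix (Fin m) (Fin m) ℝ) : ℝ :=
  if Even m then
    (((2 : ℝ) ^ (m / 2) * (Nat.factorial (m / 2)))⁻¹) *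
      ∑ σ : Equiv.Perm (Fin m), ((Equiv.Perm.sign σ : ℤ) : ℝ) *
        ∏ i : Fin (m / 2),
          A (σ ⟨2 * i.val, by have := i.2; omega⟩) (σ ⟨2 * i.val + 1, by have := i.2; omega⟩)
  else 0

/-- Order-preserving enumeration of a finite set of indices. -/
def embI {n : ℕ} (I : Finset (Fin n)) : Fin I.card → Fin n :=
  fun j => (I.orderIsoOfFin rfl j : Fin n)

/-- Order-preserving enumeration of `{0,…,N-1} ∪ (N + I)` inside `Fin (N + n)`. -/
def embNI (N n : ℕ) (I : Finset (Fin n)) : Fin (N + I.card) → Fin (N + n) :=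
  fun j =>
    if h : j.val < N then ⟨j.val, by omega⟩
    else ⟨N + (embI I ⟨j.val - N, by have := j.2; omega⟩).val,
      by have := (embI I ⟨j.val - N, by have := j.2; omega⟩).2; omega⟩

/-!
Order the blocks of `X_I` as `{1, …, N}` followed by `I`. Eliminating the off-diagonal blocks by a
unipotent congruence turns `X_I` into the block diagonal of `X_∅` and its Schur complement, and the
Schur complements for the various `I` are the principal submatrices of a single matrix `Y`, the
Schur complement of `X_∅` in `X`. Hence it suffices that the Pfaffian is invariant under unipotent
congruence and multiplicative on block diagonal matrices. For the latter, a permutation contributes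
only if it sends each pair into one block; the choices of the pairs sent to the first block, a
binomial coefficient in number, contribute equally, since permuting the pairs is an even permutation
of the indices.
-/

section PfaffianSum

variable {ι α R : Type*} [Fintype ι] [Fintype α] [DecidableEq α] [CommRing R]

/-- The signed product which a permutation contributes to the Pfaffian. The bijection `e` splits the
index type into ordered pairs `(e (i, 0), e (i, 1))`, so that no numbering of it is needed. -/
def pfaffianTerm (e : ι × Fin 2 ≃ α) (M : Matrix α α R) (σ : Equiv.Perm α) : R :=
  ((Equiv.Perm.sign σ : ℤ) : R) * ∏ i, M (σ (e (i, 0))) (σ (e (i, 1)))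

/-- The Pfaffian before division by `2 ^ k * k !`, where `k` is the number of pairs in `e`. -/
def pfaffianSum (e : ι × Fin 2 ≃ α) (M : Matrix α α R) : R :=
  ∑ σ, pfaffianTerm e M σ

theorem pfaffianSum_trans {β : Type*} [Fintype β] [DecidableEq β] (e : ι × Fin 2 ≃ α)
    (f : α ≃ β) (M : Matrix β β R) :
    pfaffianSum (e.trans f) M = pfaffianSum e (M.submatrix f f) := by
  rw [pfaffianSum, ← Equiv.sum_comp f.permCongr]
  simp only [pfaffianSum, pfaffianTerm, Equiv.Perm.sign_permCongr, Equiv.permCongr_apply,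
    Equiv.trans_apply, Equiv.symm_apply_apply, Matrix.submatrix_apply]

theorem pfaffianSum_prodCongr_trans {κ : Type*} [Fintype κ] (g : κ ≃ ι) (e : ι × Fin 2 ≃ α)
    (M : Matrix α α R) :
    pfaffianSum ((g.prodCongr (Equiv.refl _)).trans e) M = pfaffianSum e M :=
  Finset.sum_congr rfl fun σ _ => congrArg _ <|
    Equiv.prod_comp g fun i => M (σ (e (i, 0))) (σ (e (i, 1)))

end PfaffianSum

section Congruence

variable {ι α β γ R : Type*} [Fintype ι] [Fintype α] [DecidableEq α] [Fintype γ] [CommRing R]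

theorem sum_det_submatrix_id_mul (P : Matrix α α R) (F : (α → α) → R) :
    ∑ f : α → α, (P.submatrix id f).det * F f =
      P.det * ∑ σ : Equiv.Perm α, ((Equiv.Perm.sign σ : ℤ) : R) * F σ := by
  rw [Finset.mul_sum]
  symm
  refine Finset.sum_of_injOn (fun σ : Equiv.Perm α => (σ : α → α))
    DFunLike.coe_injective.injOn (fun _ _ => Finset.mem_coe.2 (Finset.mem_univ _)) ?_ ?_
  · intro f _ hf
    have hf_inj : ¬ Function.Injective f := fun hinj =>
      hf ⟨Equiv.ofBijective f (Finite.injective_iff_bijective.1 hinj), by simp, rfl⟩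
    obtain ⟨a, b, hab, hne⟩ := Function.not_injective_iff.1 hf_inj
    rw [Matrix.det_zero_of_column_eq hne fun c => by rw [Matrix.submatrix_apply, hab]; rfl,
      zero_mul]
  · intro σ _
    rw [Matrix.det_permute']
    ring

theorem prod_mul_mul_transpose_apply (e : ι × Fin 2 ≃ α) (P : Matrix β γ R)
    (M : Matrix γ γ R) (r : α → β) :
    ∏ i, (P * M * P.transpose) (r (e (i, 0))) (r (e (i, 1))) =
      ∑ f : α → γ, (∏ a, P (r a) (f a)) * ∏ i, M (f (e (i, 0))) (f (e (i, 1))) := by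
  classical
  have entry (x y : β) : (P * M * P.transpose) x y =
      ∑ c : γ × γ, P x c.1 * P y c.2 * M c.1 c.2 := by
    simp only [Fintype.sum_prod_type_right, Matrix.mul_apply, Matrix.transpose_apply,
      Finset.sum_mul, mul_right_comm]
  let toPairs : (α → γ) ≃ (ι → γ × γ) :=
    ((e.arrowCongr (Equiv.refl γ)).symm.trans (Equiv.curry ι (Fin 2) γ)).trans
      (Equiv.piCongrRight fun _ => finTwoArrowEquiv γ)
  simp only [entry]
  rw [Finset.prod_univ_sum, Fintype.piFinset_univ, ← Equiv.sum_comp toPairs]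
  refine Finset.sum_congr rfl fun f _ => ?_
  rw [Finset.prod_mul_distrib, ← Equiv.prod_comp e (fun a => P (r a) (f a)),
    Fintype.prod_prod_type]
  simp [toPairs, Fin.prod_univ_two]

theorem pfaffianSum_mul_mul_transpose (e : ι × Fin 2 ≃ α) (P M : Matrix α α R) :
    pfaffianSum e (P * M * P.transpose) = P.det * pfaffianSum e M := by
  let F (f : α → α) : R := ∏ i, M (f (e (i, 0))) (f (e (i, 1)))
  calc pfaffianSum e (P * M * P.transpose)
      = ∑ σ : Equiv.Perm α, ∑ f : α → α,
          ((Equiv.Perm.sign σ : ℤ) : R) * (∏ a, P (σ a) (f a)) * F f := by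
        simp only [pfaffianSum, pfaffianTerm, prod_mul_mul_transpose_apply e, Finset.mul_sum,
          ← mul_assoc, F]
    _ = ∑ f : α → α, (P.submatrix id f).det * F f := by
        rw [Finset.sum_comm]
        simp only [Matrix.det_apply', Matrix.submatrix_apply, id_eq, Finset.sum_mul]
    _ = P.det * pfaffianSum e M := sum_det_submatrix_id_mul P F

end Congruence

section PairPerm

variable {ι α : Type*}

/-- The permutation of the index type that permutes the pairs of `e` by `π`, preserving the order
within each pair. -/
def pairPerm (e : ι × Fin 2 ≃ α) (π : Equiv.Perm ι) : Equiv.Perm α :=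
  e.permCongr (π.prodCongr (Equiv.refl (Fin 2)))

@[simp]
theorem pairPerm_apply (e : ι × Fin 2 ≃ α) (π : Equiv.Perm ι) (i : ι) (b : Fin 2) :
    pairPerm e π (e (i, b)) = e (π i, b) := by
  simp [pairPerm]

variable [Fintype α] [DecidableEq α]

theorem sign_pairPerm (e : ι × Fin 2 ≃ α) (π : Equiv.Perm ι) :
    Equiv.Perm.sign (pairPerm e π) = 1 := by
  classical
  have := Fintype.ofInjective (fun i => e (i, 0)) fun i j hij => by simpa using hij
  have h : π.prodCongr (Equiv.refl (Fin 2)) = Equiv.prodCongrLeft fun _ => π := by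
    ext x <;> simp
  rw [pairPerm, Equiv.Perm.sign_permCongr, h, Equiv.Perm.sign_prodCongrLeft, Fin.prod_univ_two,
    Int.units_mul_self]

theorem pfaffianTerm_mul_pairPerm [Fintype ι] {R : Type*} [CommRing R] (e : ι × Fin 2 ≃ α)
    (M : Matrix α α R) (σ : Equiv.Perm α) (π : Equiv.Perm ι) :
    pfaffianTerm e M (σ * pairPerm e π) = pfaffianTerm e M σ := by
  simp only [pfaffianTerm, Equiv.Perm.sign_mul, sign_pairPerm, mul_one, Equiv.Perm.mul_apply,
    pairPerm_apply]
  rw [Equiv.prod_comp π fun i => M (σ (e (i, 0))) (σ (e (i, 1)))]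

end PairPerm

section LeftPairs

open scoped Pointwise

variable {ι α β R : Type*} [Fintype ι] (e : ι × Fin 2 ≃ α ⊕ β)

/-- The pairs of `e` whose first element a permutation sends to the left summand. -/
def leftPairs (σ : Equiv.Perm (α ⊕ β)) : Finset ι :=
  {i | (σ (e (i, 0))).isLeft}

@[simp]
theorem mem_leftPairs {σ : Equiv.Perm (α ⊕ β)} {i : ι} :
    i ∈ leftPairs e σ ↔ (σ (e (i, 0))).isLeft := by
  simp [leftPairs]

theorem smul_leftPairs_mul_pairPerm [DecidableEq ι] (σ : Equiv.Perm (α ⊕ β)) (π : Equiv.Perm ι) :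
    π • leftPairs e (σ * pairPerm e π) = leftPairs e σ := by
  ext i
  simp [← Finset.inv_smul_mem_iff]

variable [Fintype α] [DecidableEq α] [Fintype β] [DecidableEq β] [CommRing R]

theorem isLeft_eq_of_pfaffianTerm_ne_zero {A : Matrix α α R} {D : Matrix β β R}
    {σ : Equiv.Perm (α ⊕ β)} (h : pfaffianTerm e (Matrix.fromBlocks A 0 0 D) σ ≠ 0) (i : ι) :
    (σ (e (i, 1))).isLeft = (σ (e (i, 0))).isLeft := by
  have entry_ne_zero : Matrix.fromBlocks A 0 0 D (σ (e (i, 0))) (σ (e (i, 1))) ≠ 0 := fun h0 =>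
    h (by rw [pfaffianTerm, Finset.prod_eq_zero (Finset.mem_univ i) h0, mul_zero])
  rcases hx : σ (e (i, 0)) with x | x <;> rcases hy : σ (e (i, 1)) with y | y <;> simp_all

theorem card_leftPairs_mul_two {A : Matrix α α R} {D : Matrix β β R} {σ : Equiv.Perm (α ⊕ β)}
    (h : pfaffianTerm e (Matrix.fromBlocks A 0 0 D) σ ≠ 0) :
    (leftPairs e σ).card * 2 = Fintype.card α := by
  calc (leftPairs e σ).card * 2 = ∑ a : α ⊕ β, if (σ a).isLeft then 1 else 0 := by
        rw [← Equiv.sum_comp e, Fintype.sum_prod_type]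
        simp only [Fin.sum_univ_two, isLeft_eq_of_pfaffianTerm_ne_zero e h, leftPairs,
          Finset.card_filter, Finset.sum_add_distrib, mul_two]
    _ = ∑ a : α ⊕ β, if a.isLeft then 1 else 0 :=
        Equiv.sum_comp σ fun a => if a.isLeft then 1 else 0
    _ = Fintype.card α := by rw [Fintype.sum_sum_type]; simp

theorem sum_pfaffianTerm_leftPairs_eq_of_card_eq [DecidableEq ι] (M : Matrix (α ⊕ β) (α ⊕ β) R)
    {s t : Finset ι} (hst : s.card = t.card) :
    ∑ σ with leftPairs e σ = s, pfaffianTerm e M σ =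
      ∑ σ with leftPairs e σ = t, pfaffianTerm e M σ := by
  obtain ⟨π, hπ⟩ : ∃ π : Equiv.Perm ι, π • s = t := by
    obtain ⟨π, hπ⟩ := Set.powersetCard.isPretransitive.exists_smul_eq
      (⟨s, hst⟩ : Set.powersetCard ι t.card) ⟨t, rfl⟩
    exact ⟨π, congrArg Subtype.val hπ⟩
  rw [Finset.sum_filter, Finset.sum_filter, ← Equiv.sum_comp (Equiv.mulRight (pairPerm e π))]
  refine Finset.sum_congr rfl fun σ _ => ?_
  simp only [Equiv.coe_mulRight, pfaffianTerm_mul_pairPerm, ← hπ,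
    ← smul_leftPairs_mul_pairPerm e σ π, smul_left_cancel_iff]

end LeftPairs

section BlockDiagonal

variable {ι κ α β R : Type*}

/-- The pairing of a disjoint union that lists the pairs of both summands. -/
def sumPairing (e₁ : ι × Fin 2 ≃ α) (e₂ : κ × Fin 2 ≃ β) : (ι ⊕ κ) × Fin 2 ≃ α ⊕ β :=
  (Equiv.sumProdDistrib ι κ (Fin 2)).trans (Equiv.sumCongr e₁ e₂)

@[simp]
theorem sumPairing_inl (e₁ : ι × Fin 2 ≃ α) (e₂ : κ × Fin 2 ≃ β) (i : ι) (b : Fin 2) :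
    sumPairing e₁ e₂ (Sum.inl i, b) = Sum.inl (e₁ (i, b)) :=
  rfl

@[simp]
theorem sumPairing_inr (e₁ : ι × Fin 2 ≃ α) (e₂ : κ × Fin 2 ≃ β) (j : κ) (b : Fin 2) :
    sumPairing e₁ e₂ (Sum.inr j, b) = Sum.inr (e₂ (j, b)) :=
  rfl

variable [Fintype ι] [Fintype κ] [Fintype α] [DecidableEq α] [Fintype β] [DecidableEq β]
  [CommRing R] (e₁ : ι × Fin 2 ≃ α) (e₂ : κ × Fin 2 ≃ β) (A : Matrix α α R) (D : Matrix β β R)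

theorem pfaffianTerm_sumCongr (σ : Equiv.Perm α) (τ : Equiv.Perm β) :
    pfaffianTerm (sumPairing e₁ e₂) (Matrix.fromBlocks A 0 0 D) (Equiv.Perm.sumCongr σ τ) =
      pfaffianTerm e₁ A σ * pfaffianTerm e₂ D τ := by
  simp [pfaffianTerm, Fintype.prod_sum_type, mul_mul_mul_comm]

theorem mem_range_sumCongrHom_of_pfaffianTerm_ne_zero {σ : Equiv.Perm (α ⊕ β)}
    (hterm : pfaffianTerm (sumPairing e₁ e₂) (Matrix.fromBlocks A 0 0 D) σ ≠ 0)
    (hleft : leftPairs (sumPairing e₁ e₂) σ = Finset.univ.map .inl) :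
    σ ∈ (Equiv.Perm.sumCongrHom α β).range := by
  refine Equiv.Perm.mem_sumCongrHom_range_of_perm_mapsTo_inl ?_
  rintro _ ⟨a, rfl⟩
  obtain ⟨⟨i, b⟩, rfl⟩ := e₁.surjective a
  have h0 : (σ (Sum.inl (e₁ (i, 0)))).isLeft :=
    (mem_leftPairs (sumPairing e₁ e₂) (i := Sum.inl i)).1 (by simp [hleft])
  have h1 : (σ (Sum.inl (e₁ (i, 1)))).isLeft :=
    (isLeft_eq_of_pfaffianTerm_ne_zero _ hterm (Sum.inl i)).trans h0
  have hb : (σ (Sum.inl (e₁ (i, b)))).isLeft := by fin_cases b <;> assumption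
  obtain ⟨y, hy⟩ := Sum.isLeft_iff.1 hb
  exact ⟨y, hy.symm⟩

theorem sum_pfaffianTerm_leftPairs_eq_map_inl [DecidableEq ι] [DecidableEq κ] :
    ∑ σ with leftPairs (sumPairing e₁ e₂) σ = Finset.univ.map .inl,
        pfaffianTerm (sumPairing e₁ e₂) (Matrix.fromBlocks A 0 0 D) σ =
      pfaffianSum e₁ A * pfaffianSum e₂ D := by
  rw [pfaffianSum, pfaffianSum, Fintype.sum_mul_sum, ← Fintype.sum_prod_type']
  symm
  refine Finset.sum_of_injOn (Equiv.Perm.sumCongrHom α β)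
    Equiv.Perm.sumCongrHom_injective.injOn ?_ ?_
    fun p _ => (pfaffianTerm_sumCongr e₁ e₂ A D p.1 p.2).symm
  · intro p _
    rw [Finset.mem_coe, Finset.mem_filter_univ]
    ext i
    rcases i with i | i <;> simp
  · intro σ hσ hnot
    by_contra hterm
    obtain ⟨p, hp⟩ := mem_range_sumCongrHom_of_pfaffianTerm_ne_zero e₁ e₂ A D hterm
      (Finset.mem_filter.1 hσ).2
    exact hnot ⟨p, Finset.mem_coe.2 (Finset.mem_univ p), hp⟩

theorem sum_pfaffianTerm_leftPairs_eq_mul [DecidableEq ι] [DecidableEq κ] {s : Finset (ι ⊕ κ)}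
    (hs : s.card = Fintype.card ι) :
    ∑ σ with leftPairs (sumPairing e₁ e₂) σ = s,
        pfaffianTerm (sumPairing e₁ e₂) (Matrix.fromBlocks A 0 0 D) σ =
      pfaffianSum e₁ A * pfaffianSum e₂ D := by
  rw [← sum_pfaffianTerm_leftPairs_eq_map_inl]
  refine sum_pfaffianTerm_leftPairs_eq_of_card_eq _ _ ?_
  rw [hs, Finset.card_map, Finset.card_univ]

variable {A D} in
theorem card_leftPairs_sumPairing {σ : Equiv.Perm (α ⊕ β)}
    (h : pfaffianTerm (sumPairing e₁ e₂) (Matrix.fromBlocks A 0 0 D) σ ≠ 0) :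
    (leftPairs (sumPairing e₁ e₂) σ).card = Fintype.card ι := by
  refine Nat.mul_right_cancel two_pos ?_
  rw [card_leftPairs_mul_two _ h, ← Fintype.card_congr e₁, Fintype.card_prod, Fintype.card_fin]

theorem pfaffianSum_fromBlocks_zero :
    pfaffianSum (sumPairing e₁ e₂) (Matrix.fromBlocks A 0 0 D) =
      ((Fintype.card ι + Fintype.card κ).choose (Fintype.card ι) : R) *
        (pfaffianSum e₁ A * pfaffianSum e₂ D) := by
  classical
  let e := sumPairing e₁ e₂
  let M := Matrix.fromBlocks A 0 0 D
  calc pfaffianSum e M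
      = ∑ s, ∑ σ with leftPairs e σ = s, pfaffianTerm e M σ := by
        rw [pfaffianSum, Finset.sum_fiberwise]
    _ = ∑ s ∈ Finset.powersetCard (Fintype.card ι) Finset.univ,
          ∑ σ with leftPairs e σ = s, pfaffianTerm e M σ := by
        refine (Finset.sum_subset (Finset.subset_univ _) fun s _ hs => ?_).symm
        refine Finset.sum_eq_zero fun σ hσ => of_not_not fun hterm => hs ?_
        rw [Finset.mem_powersetCard_univ, ← (Finset.mem_filter.1 hσ).2,
          card_leftPairs_sumPairing e₁ e₂ hterm]
    _ = ∑ _s ∈ Finset.powersetCard (Fintype.card ι) (Finset.univ : Finset (ι ⊕ κ)),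
          pfaffianSum e₁ A * pfaffianSum e₂ D :=
        Finset.sum_congr rfl fun _ hs =>
          sum_pfaffianTerm_leftPairs_eq_mul e₁ e₂ A D (Finset.mem_powersetCard_univ.1 hs)
    _ = _ := by
        rw [Finset.sum_const, Finset.card_powersetCard, Finset.card_univ, Fintype.card_sum,
          nsmul_eq_mul]

end BlockDiagonal

section SchurComplement

open Matrix

variable {m n R : Type*}

theorem transpose_toBlocks_of_transpose_eq_neg [Neg R] {M : Matrix (m ⊕ n) (m ⊕ n) R}
    (hM : Mᵀ = -M) :
    M.toBlocks₁₁ᵀ = -M.toBlocks₁₁ ∧ M.toBlocks₁₂ᵀ = -M.toBlocks₂₁ ∧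
      M.toBlocks₂₁ᵀ = -M.toBlocks₁₂ ∧ M.toBlocks₂₂ᵀ = -M.toBlocks₂₂ :=
  ⟨congrArg toBlocks₁₁ hM, congrArg toBlocks₂₁ hM, congrArg toBlocks₁₂ hM, congrArg toBlocks₂₂ hM⟩

variable [Fintype m] [DecidableEq m] [CommRing R]

/-- The Schur complement of the upper-left block, the junk value of `⁻¹` entering when that block
is singular. -/
noncomputable def schurComplement (M : Matrix (m ⊕ n) (m ⊕ n) R) : Matrix n n R :=
  M.toBlocks₂₂ - M.toBlocks₂₁ * M.toBlocks₁₁⁻¹ * M.toBlocks₁₂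

theorem schurComplement_submatrix {l : Type*} (M : Matrix (m ⊕ n) (m ⊕ n) R) (f : l → n) :
    schurComplement (M.submatrix (Sum.map id f) (Sum.map id f)) =
      (schurComplement M).submatrix f f :=
  rfl

theorem transpose_inv_of_transpose_eq_neg {A : Matrix m m R} (hA : Aᵀ = -A)
    (hdet : IsUnit A.det) : A⁻¹ᵀ = -A⁻¹ := by
  rw [transpose_nonsing_inv, hA]
  exact inv_eq_right_inv (by rw [neg_mul_neg, mul_nonsing_inv _ hdet])

theorem transpose_schurComplement_of_transpose_eq_neg {M : Matrix (m ⊕ n) (m ⊕ n) R}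
    (hM : Mᵀ = -M) (hdet : IsUnit M.toBlocks₁₁.det) :
    (schurComplement M)ᵀ = -schurComplement M := by
  obtain ⟨h₁₁, h₁₂, h₂₁, h₂₂⟩ := transpose_toBlocks_of_transpose_eq_neg hM
  simp only [schurComplement, transpose_sub, transpose_mul, h₁₂, h₂₁, h₂₂,
    transpose_inv_of_transpose_eq_neg h₁₁ hdet, Matrix.neg_mul, Matrix.mul_neg, neg_neg, neg_sub,
    Matrix.mul_assoc]
  abel

theorem eq_mul_fromBlocks_schurComplement_mul_transpose [Fintype n] [DecidableEq n]
    {M : Matrix (m ⊕ n) (m ⊕ n) R} (hM : Mᵀ = -M) (hdet : IsUnit M.toBlocks₁₁.det) :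
    M = fromBlocks 1 0 (M.toBlocks₂₁ * M.toBlocks₁₁⁻¹) 1 *
      fromBlocks M.toBlocks₁₁ 0 0 (schurComplement M) *
        (fromBlocks 1 0 (M.toBlocks₂₁ * M.toBlocks₁₁⁻¹) 1)ᵀ := by
  obtain ⟨h₁₁, -, h₂₁, -⟩ := transpose_toBlocks_of_transpose_eq_neg hM
  have hcorner : (M.toBlocks₂₁ * M.toBlocks₁₁⁻¹)ᵀ = M.toBlocks₁₁⁻¹ * M.toBlocks₁₂ := by
    rw [transpose_mul, h₂₁, transpose_inv_of_transpose_eq_neg h₁₁ hdet, Matrix.neg_mul,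
      Matrix.mul_neg, neg_neg]
  let _ := invertibleOfIsUnitDet _ hdet
  conv_lhs => rw [← fromBlocks_toBlocks M, fromBlocks_eq_of_invertible₁₁]
  rw [fromBlocks_transpose, hcorner, transpose_one, transpose_one, transpose_zero,
    invOf_eq_nonsing_inv, schurComplement]

theorem pfaffianSum_eq_choose_mul_schurComplement {ι κ : Type*} [Fintype ι] [Fintype κ] [Fintype n]
    [DecidableEq n] (e₁ : ι × Fin 2 ≃ m) (e₂ : κ × Fin 2 ≃ n) {M : Matrix (m ⊕ n) (m ⊕ n) R}
    (hM : Mᵀ = -M) (hdet : IsUnit M.toBlocks₁₁.det) :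
    pfaffianSum (sumPairing e₁ e₂) M =
      ((Fintype.card ι + Fintype.card κ).choose (Fintype.card ι) : R) *
        (pfaffianSum e₁ M.toBlocks₁₁ * pfaffianSum e₂ (schurComplement M)) := by
  conv_lhs => rw [eq_mul_fromBlocks_schurComplement_mul_transpose hM hdet]
  rw [pfaffianSum_mul_mul_transpose, det_fromBlocks_zero₁₂, det_one, det_one, one_mul, one_mul,
    pfaffianSum_fromBlocks_zero]

end SchurComplement

section Normalization

open Matrix

/-- The pairing of `Fin m` into consecutive indices `2 * i` and `2 * i + 1`. -/
def finPairing {m : ℕ} (hm : Even m) : Fin (m / 2) × Fin 2 ≃ Fin m :=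
  finProdFinEquiv.trans (finCongr (Nat.div_mul_cancel hm.two_dvd))

theorem val_finPairing {m : ℕ} (hm : Even m) (i : Fin (m / 2)) (b : Fin 2) :
    (finPairing hm (i, b)).val = 2 * i.val + b.val := by
  simp [finPairing, add_comm]

theorem Pf_eq_pfaffianSum {m : ℕ} (hm : Even m) (A : Matrix (Fin m) (Fin m) ℝ) :
    Pf A = ((2 : ℝ) ^ (m / 2) * (m / 2).factorial)⁻¹ * pfaffianSum (finPairing hm) A := by
  have h0 (i : Fin (m / 2)) : (⟨2 * i.val, by omega⟩ : Fin m) = finPairing hm (i, 0) :=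
    Fin.ext (val_finPairing hm i 0).symm
  have h1 (i : Fin (m / 2)) : (⟨2 * i.val + 1, by omega⟩ : Fin m) = finPairing hm (i, 1) :=
    Fin.ext (val_finPairing hm i 1).symm
  simp only [Pf, if_pos hm, h0, h1, pfaffianSum, pfaffianTerm]

theorem sumPairing_finPairing {N k : ℕ} (hN : Even N) (hk : Even k) :
    (sumPairing (finPairing hN) (finPairing hk)).trans finSumFinEquiv =
      ((finSumFinEquiv.trans (finCongr (Nat.add_div_of_dvd_right hN.two_dvd).symm)).prodCongr
        (Equiv.refl (Fin 2))).trans (finPairing (hN.add hk)) := by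
  have hN2 := Nat.div_mul_cancel hN.two_dvd
  ext ⟨i | j, b⟩
  · simp [val_finPairing]
  · have hj : N + (2 * j.val + b.val) = 2 * (N / 2 + j.val) + b.val := by omega
    simpa [val_finPairing] using hj

theorem pfaffianSum_finPairing_submatrix {R : Type*} [CommRing R] {N k : ℕ} (hN : Even N)
    (hk : Even k) (M : Matrix (Fin N ⊕ Fin k) (Fin N ⊕ Fin k) R) :
    pfaffianSum (finPairing (hN.add hk)) (M.submatrix finSumFinEquiv.symm finSumFinEquiv.symm) =
      pfaffianSum (sumPairing (finPairing hN) (finPairing hk)) M := by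
  rw [← pfaffianSum_prodCongr_trans (finSumFinEquiv.trans
      (finCongr (Nat.add_div_of_dvd_right hN.two_dvd).symm)),
    ← sumPairing_finPairing hN hk, pfaffianSum_trans, submatrix_submatrix, Equiv.symm_comp_self,
    submatrix_id_id]

theorem Pf_eq_Pf_schurComplement_mul_Pf {N k : ℕ} (hN : Even N)
    {M : Matrix (Fin N ⊕ Fin k) (Fin N ⊕ Fin k) ℝ} (hM : Mᵀ = -M)
    (hdet : IsUnit M.toBlocks₁₁.det) :
    Pf (M.submatrix finSumFinEquiv.symm finSumFinEquiv.symm) =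
      Pf (schurComplement M) * Pf M.toBlocks₁₁ := by
  by_cases hk : Even k
  · have hchoose : ((N / 2 + k / 2).choose (N / 2) : ℝ) * (N / 2).factorial * (k / 2).factorial =
        (N / 2 + k / 2).factorial := by
      rw [Nat.choose_symm_add]
      exact_mod_cast Nat.add_choose_mul_factorial_mul_factorial (N / 2) (k / 2)
    have hfactorial (j : ℕ) : (j.factorial : ℝ) ≠ 0 := mod_cast j.factorial_ne_zero
    have hchoose_ne : ((N / 2 + k / 2).choose (N / 2) : ℝ) ≠ 0 :=
      mod_cast (Nat.choose_pos (Nat.le_add_right _ _)).ne'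
    rw [Pf_eq_pfaffianSum (hN.add hk), pfaffianSum_finPairing_submatrix hN hk,
      pfaffianSum_eq_choose_mul_schurComplement _ _ hM hdet, Pf_eq_pfaffianSum hN,
      Pf_eq_pfaffianSum hk, Nat.add_div_of_dvd_right hN.two_dvd, Fintype.card_fin,
      Fintype.card_fin, ← hchoose, pow_add]
    field_simp [hfactorial]
  · have hNk : ¬ Even (N + k) := fun h => hk ((Nat.even_add.1 h).1 hN)
    rw [Pf, if_neg hNk, Pf, if_neg hk, zero_mul]

theorem embNI_eq_finSumFinEquiv_comp (N n : ℕ) (I : Finset (Fin n)) :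
    embNI N n I = finSumFinEquiv ∘ Sum.map id (embI I) ∘ finSumFinEquiv.symm := by
  funext j
  obtain ⟨i | j, rfl⟩ := finSumFinEquiv.surjective j
  · exact Fin.ext (by simp [embNI])
  · exact Fin.ext (by simp [embNI])

end Normalization

open Matrix in
theorem pf_factorization (N n : ℕ) (hN : Even N)
    (X : Matrix (Fin (N + n)) (Fin (N + n)) ℝ) (hskew : Xᵀ = -X)
    (hinv : IsUnit (X.submatrix (fun i : Fin N => (⟨i.val, by omega⟩ : Fin (N + n)))
      (fun i : Fin N => (⟨i.val, by omega⟩ : Fin (N + n)))).det) :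
    ∃ Y : Matrix (Fin n) (Fin n) ℝ, Yᵀ = -Y ∧
      ∀ I : Finset (Fin n),
        Pf (X.submatrix (embNI N n I) (embNI N n I)) =
          Pf (Y.submatrix (embI I) (embI I)) *
            Pf (X.submatrix (fun i : Fin N => (⟨i.val, by omega⟩ : Fin (N + n)))
              (fun i : Fin N => (⟨i.val, by omega⟩ : Fin (N + n)))) := by
  let Z : Matrix (Fin N ⊕ Fin n) (Fin N ⊕ Fin n) ℝ := X.submatrix finSumFinEquiv finSumFinEquiv
  have hZ : Zᵀ = -Z := congrArg (fun M => M.submatrix finSumFinEquiv finSumFinEquiv) hskew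
  refine ⟨schurComplement Z, transpose_schurComplement_of_transpose_eq_neg hZ hinv, fun I => ?_⟩
  let Z_I := Z.submatrix (Sum.map id (embI I)) (Sum.map id (embI I))
  have hZ_I : Z_Iᵀ = -Z_I :=
    congrArg (fun M => M.submatrix (Sum.map id (embI I)) (Sum.map id (embI I))) hZ
  calc Pf (X.submatrix (embNI N n I) (embNI N n I))
      = Pf (Z_I.submatrix finSumFinEquiv.symm finSumFinEquiv.symm) := by
        rw [embNI_eq_finSumFinEquiv_comp]; rfl
    _ = Pf (schurComplement Z_I) * Pf Z_I.toBlocks₁₁ :=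
        Pf_eq_Pf_schurComplement_mul_Pf hN hZ_I hinv
    _ = Pf ((schurComplement Z).submatrix (embI I) (embI I)) * Pf Z.toBlocks₁₁ := by
        rw [schurComplement_submatrix]; rfl
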